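/- Let x_1,…,x_m ∈ ℝ^d satisfy max_i ‖x_i‖ ≤ 1 and be separable with margin γ ∈ (0,1], let ℓ(z) = log(1 + exp(−z)) be the logistic loss, and consider gradient descent iterates w_1 = 0, w_{t+1} = w_t − ∇L̂(w_t) (step size 1). Then for any T > 4 such that log²(T)/(γ²T) < log 2, and any α ∈ [0,1], at least (1 − 2(log²(T)/(γ²T))^α)·m of the indices i ∈ {1,…,m} satisfy x_iᵀ(w_T/‖w_T‖) > (1−α)γ/2. -/

import Mathlib

open scoped RealInnerProductSpace

/-! Rescaling the separating direction gives, for every `r ≥ 0`, a point `u` with `‖u‖ ≤ r / γ` and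
risk at most `ℓ r`. The `n`-th iterate `v` of gradient descent from the origin on a convex smooth
function `L` satisfies `‖v - u‖ ^ 2 + 2 n (L v - L u) ≤ ‖u‖ ^ 2`, and this is used twice. With
`r = log T` and `n = T - 1` it bounds the risk of `v` by `ε = log² T / (γ² T)`. With `r` such that
`ℓ r` equals the risk of `v` it gives `‖v‖ ≤ 2 r / γ`. By Markov's inequality all but a fraction
`2 ε ^ α` of the points have loss at most `ℓ r / (2 ε ^ α) ≤ (ℓ r) ^ (1 - α) / 2`; this forces
`(1 - α) r < ⟪x i, v⟫`, and dividing by `‖v‖` gives the margin `(1 - α) γ / 2`. -/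

open scoped BigOperators Finset

section ConvexSmooth

variable {E : Type*} [NormedAddCommGroup E] [InnerProductSpace ℝ E]

/-- Convexity and `β`-smoothness of `L`, in first-order form: at every point `v`, the function `L`
lies between its tangent plane and a paraboloid of curvature `β` touching it, where `g v` stands for
the gradient of `L` at `v`. -/
structure IsConvexSmooth (β : ℝ) (L : E → ℝ) (g : E → E) : Prop where
  tangent_le : ∀ v u, L v + ⟪g v, u - v⟫ ≤ L u
  le_quadratic : ∀ v u, L u ≤ L v + ⟪g v, u - v⟫ + β / 2 * ‖u - v‖ ^ 2

lemma add_mul_sub_le_of_monotone_deriv {f f' : ℝ → ℝ} (hf : ∀ z, HasDerivAt f (f' z) z)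
    (hf' : Monotone f') (a b : ℝ) : f a + f' a * (b - a) ≤ f b := by
  have hderiv : deriv f = f' := funext fun z => (hf z).deriv
  have hconv : ConvexOn ℝ Set.univ f :=
    Monotone.convexOn_univ_of_deriv (fun z => (hf z).differentiableAt) (hderiv ▸ hf')
  rcases lt_trichotomy a b with hab | rfl | hab
  · have h := hconv.le_slope_of_hasDerivAt (Set.mem_univ a) (Set.mem_univ b) hab (hf a)
    rw [slope_def_field, le_div_iff₀ (sub_pos.2 hab)] at h
    linarith
  · simp
  · have h := hconv.slope_le_of_hasDerivAt (Set.mem_univ b) (Set.mem_univ a) hab (hf a)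
    rw [slope_def_field, div_le_iff₀ (sub_pos.2 hab)] at h
    linarith

namespace IsConvexSmooth

lemma of_hasDerivAt {β : ℝ} {f f' : ℝ → ℝ} (hf : ∀ z, HasDerivAt f (f' z) z)
    (hf' : Monotone f') (hβ : Monotone fun z => β * z - f' z) : IsConvexSmooth β f f' where
  tangent_le a b := by
    simpa [mul_comm] using add_mul_sub_le_of_monotone_deriv hf hf' a b
  le_quadratic a b := by
    have hquad (z : ℝ) : HasDerivAt (fun z => β / 2 * z ^ 2 - f z) (β * z - f' z) z :=
      (((hasDerivAt_pow 2 z).const_mul (β / 2)).sub (hf z)).congr_deriv (by simp; ring)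
    have h := add_mul_sub_le_of_monotone_deriv hquad hβ a b
    simp only [RCLike.inner_apply, conj_trivial, Real.norm_eq_abs, sq_abs]
    linarith

variable {β η : ℝ} {L : E → ℝ} {g : E → E}

lemma gradientStep_le (h : IsConvexSmooth β L g) (hη : 0 ≤ η) (hηβ : η * β ≤ 1) (v : E) :
    L (v - η • g v) ≤ L v - η / 2 * ‖g v‖ ^ 2 := by
  have hquad := h.le_quadratic v (v - η • g v)
  rw [sub_sub_cancel_left, inner_neg_right, real_inner_smul_right, real_inner_self_eq_norm_sq,
    norm_neg, norm_smul, mul_pow, Real.norm_eq_abs, sq_abs] at hquad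
  have hcurv : η * β * (η * ‖g v‖ ^ 2) ≤ 1 * (η * ‖g v‖ ^ 2) := by gcongr
  linarith

lemma norm_sub_sq_gradientStep_le (h : IsConvexSmooth β L g) (hη : 0 ≤ η) (hηβ : η * β ≤ 1)
    (v u : E) :
    ‖v - η • g v - u‖ ^ 2 ≤ ‖v - u‖ ^ 2 - 2 * η * (L (v - η • g v) - L u) := by
  have hdecrease := mul_le_mul_of_nonneg_left (h.gradientStep_le hη hηβ v) hη
  have htangent := mul_le_mul_of_nonneg_left (h.tangent_le v u) hη
  have hexpand : ‖v - η • g v - u‖ ^ 2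
      = ‖v - u‖ ^ 2 + 2 * (η * ⟪g v, u - v⟫) + η ^ 2 * ‖g v‖ ^ 2 := by
    rw [sub_right_comm, norm_sub_sq_real, real_inner_smul_right, real_inner_comm, ← neg_sub v u,
      inner_neg_right, norm_smul, mul_pow, Real.norm_eq_abs, sq_abs]
    ring
  linarith

variable {w : ℕ → E}

lemma norm_sub_sq_gradientDescent_add_le (h : IsConvexSmooth β L g) (hη : 0 ≤ η) (hηβ : η * β ≤ 1)
    (hw : ∀ t, w (t + 1) = w t - η • g (w t)) (n : ℕ) (u : E) :
    ‖w n - u‖ ^ 2 + 2 * η * n * (L (w n) - L u) ≤ ‖w 0 - u‖ ^ 2 := by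
  induction n with
  | zero => simp
  | succ n ih =>
    have hstep := h.norm_sub_sq_gradientStep_le hη hηβ (w n) u
    have hdecrease : L (w (n + 1)) ≤ L (w n) := by
      rw [hw]
      exact (h.gradientStep_le hη hηβ (w n)).trans (sub_le_self _ (by positivity))
    have hscaled : 2 * η * n * L (w (n + 1)) ≤ 2 * η * n * L (w n) := by gcongr
    rw [← hw] at hstep
    push_cast
    linarith

lemma gradientDescent_sub_le_div (h : IsConvexSmooth β L g) (hη : 0 < η) (hηβ : η * β ≤ 1)
    (hw : ∀ t, w (t + 1) = w t - η • g (w t)) {n : ℕ} (hn : 0 < n) (u : E) :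
    L (w n) - L u ≤ ‖w 0 - u‖ ^ 2 / (2 * η * n) := by
  rw [le_div_iff₀' (by positivity)]
  linarith [h.norm_sub_sq_gradientDescent_add_le hη.le hηβ hw n u, sq_nonneg ‖w n - u‖]

lemma norm_gradientDescent_sub_le (h : IsConvexSmooth β L g) (hη : 0 ≤ η) (hηβ : η * β ≤ 1)
    (hw : ∀ t, w (t + 1) = w t - η • g (w t)) {n : ℕ} {u : E} (hu : L u ≤ L (w n)) :
    ‖w n - u‖ ≤ ‖w 0 - u‖ := by
  have hgap : 0 ≤ 2 * η * n * (L (w n) - L u) := mul_nonneg (by positivity) (sub_nonneg.2 hu)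
  have hdist := h.norm_sub_sq_gradientDescent_add_le hη hηβ hw n u
  exact le_of_sq_le_sq (by linarith) (norm_nonneg _)

end IsConvexSmooth

end ConvexSmooth

section EmpiricalRisk

lemma one_sub_mul_card_le_card_filter_le_expect_div {ι : Type*} [Fintype ι] {f : ι → ℝ}
    (hf : ∀ i, 0 ≤ f i) {δ : ℝ} (hδ : 0 < δ) :
    (1 - δ) * Fintype.card ι ≤ #{i | f i ≤ (𝔼 j, f j) / δ} := by
  set c := (𝔼 j, f j) / δ with hc
  have hc0 : 0 ≤ c := div_nonneg (Finset.expect_nonneg fun i _ => hf i) hδ.le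
  suffices hlarge : (#{i | ¬ f i ≤ c} : ℝ) ≤ δ * Fintype.card ι by
    have hsplit : (#{i | f i ≤ c} + #{i | ¬ f i ≤ c} : ℝ) = Fintype.card ι := mod_cast
      Finset.card_filter_add_card_filter_not fun i => f i ≤ c
    linarith
  rcases ({i | ¬ f i ≤ c} : Finset ι).eq_empty_or_nonempty with hempty | hne
  · rw [hempty, Finset.card_empty, Nat.cast_zero]
    positivity
  refine (lt_of_mul_lt_mul_right ?_ hc0).le
  calc (#{i | ¬ f i ≤ c} : ℝ) * c = ∑ i with ¬ f i ≤ c, c := by simp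
    _ < ∑ i with ¬ f i ≤ c, f i :=
      Finset.sum_lt_sum_of_nonempty hne fun i hi => not_le.1 (Finset.mem_filter.1 hi).2
    _ ≤ ∑ i, f i := Finset.sum_le_univ_sum_of_nonneg hf
    _ = δ * Fintype.card ι * c := by
      rw [hc, ← Fintype.card_mul_expect]
      field_simp

lemma le_one_of_forall_le_inner {ι E : Type*} [Nonempty ι] [NormedAddCommGroup E]
    [InnerProductSpace ℝ E] {x : ι → E} (hx : ∀ i, ‖x i‖ ≤ 1) {w₀ : E} (hw₀ : ‖w₀‖ ≤ 1) {γ : ℝ}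
    (hsep : ∀ i, γ ≤ ⟪x i, w₀⟫) : γ ≤ 1 := by
  obtain ⟨i⟩ := ‹Nonempty ι›
  calc γ ≤ ⟪x i, w₀⟫ := hsep i
    _ ≤ ‖x i‖ * ‖w₀‖ := real_inner_le_norm _ _
    _ ≤ 1 := mul_le_one₀ (hx i) (norm_nonneg _) hw₀

variable {ι E : Type*} [Fintype ι] [NormedAddCommGroup E] [InnerProductSpace ℝ E]

/-- The empirical risk at `v` of the linear predictor `z ↦ ⟪z, v⟫` on the data `x`, for the loss
`ℓ` of the margin. -/
noncomputable def empiricalRisk (ℓ : ℝ → ℝ) (x : ι → E) (v : E) : ℝ :=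
  𝔼 i, ℓ ⟪x i, v⟫

/-- The gradient of `empiricalRisk ℓ x`, where `ℓ'` is the derivative of `ℓ`. -/
noncomputable def empiricalRiskGrad (ℓ' : ℝ → ℝ) (x : ι → E) (v : E) : E :=
  (Fintype.card ι : ℝ)⁻¹ • ∑ i, ℓ' ⟪x i, v⟫ • x i

variable {ℓ ℓ' : ℝ → ℝ} {x : ι → E}

lemma inner_empiricalRiskGrad (v u : E) :
    ⟪empiricalRiskGrad ℓ' x v, u⟫ = 𝔼 i, ℓ' ⟪x i, v⟫ * ⟪x i, u⟫ := by
  simp only [empiricalRiskGrad, real_inner_smul_left, sum_inner, Fintype.expect_eq_sum_div_card,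
    inv_mul_eq_div]

lemma hasGradientAt_empiricalRisk [CompleteSpace E] (hℓ : ∀ z, HasDerivAt ℓ (ℓ' z) z) (v : E) :
    HasGradientAt (empiricalRisk ℓ x) (empiricalRiskGrad ℓ' x v) v := by
  have hterm (i : ι) : HasFDerivAt (fun v => ℓ ⟪x i, v⟫) (ℓ' ⟪x i, v⟫ • innerSL ℝ (x i)) v :=
    (hℓ _).comp_hasFDerivAt v (innerSL ℝ (x i)).hasFDerivAt
  have hrisk : empiricalRisk ℓ x = fun v => (Fintype.card ι : ℝ)⁻¹ * ∑ i, ℓ ⟪x i, v⟫ := by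
    ext v
    rw [empiricalRisk, Fintype.expect_eq_sum_div_card, inv_mul_eq_div]
  rw [hasGradientAt_iff_hasFDerivAt, hrisk]
  refine ((HasFDerivAt.fun_sum fun i _ => hterm i).const_mul _).congr_fderiv ?_
  ext u
  simp [inner_empiricalRiskGrad, Fintype.expect_eq_sum_div_card, inv_mul_eq_div]

variable [Nonempty ι] {β R : ℝ}

lemma isConvexSmooth_empiricalRisk (hℓ : IsConvexSmooth β ℓ ℓ') (hx : ∀ i, ‖x i‖ ≤ R) :
    IsConvexSmooth (β * R ^ 2) (empiricalRisk ℓ x) (empiricalRiskGrad ℓ' x) where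
  tangent_le v u := by
    rw [inner_empiricalRiskGrad, empiricalRisk, empiricalRisk,
      ← Finset.expect_add_distrib]
    refine Finset.expect_le_expect fun i _ => ?_
    simpa [inner_sub_right, mul_comm] using hℓ.tangent_le ⟪x i, v⟫ ⟪x i, u⟫
  le_quadratic v u := by
    have hβ : 0 ≤ β := by
      have := (hℓ.tangent_le 0 1).trans (hℓ.le_quadratic 0 1)
      norm_num at this
      linarith
    rw [inner_empiricalRiskGrad, empiricalRisk, empiricalRisk,
      ← Finset.expect_add_distrib,
      ← Fintype.expect_const (ι := ι) (β * R ^ 2 / 2 * ‖u - v‖ ^ 2), ← Finset.expect_add_distrib]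
    refine Finset.expect_le_expect fun i _ => (hℓ.le_quadratic ⟪x i, v⟫ ⟪x i, u⟫).trans ?_
    have hcauchy : ‖⟪x i, u⟫ - ⟪x i, v⟫‖ ≤ R * ‖u - v‖ := by
      rw [← inner_sub_right]
      exact (norm_inner_le_norm _ _).trans (by gcongr; exact hx i)
    calc _ ≤ ℓ ⟪x i, v⟫ + ⟪ℓ' ⟪x i, v⟫, ⟪x i, u⟫ - ⟪x i, v⟫⟫ + β / 2 * (R * ‖u - v‖) ^ 2 := by
          gcongr
      _ = _ := by
          simp only [inner_sub_right, RCLike.inner_apply, conj_trivial]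
          ring

lemma empiricalRisk_le_of_forall_le (hℓ : Antitone ℓ) {v : E} {r : ℝ} (h : ∀ i, r ≤ ⟪x i, v⟫) :
    empiricalRisk ℓ x v ≤ ℓ r :=
  Finset.expect_le Finset.univ_nonempty fun i _ => hℓ (h i)

lemma empiricalRisk_zero : empiricalRisk ℓ x 0 = ℓ 0 := by
  simp [empiricalRisk]

variable {γ r : ℝ} {w₀ : E}

lemma exists_norm_le_div_empiricalRisk_le (hℓ : Antitone ℓ) (hγ : 0 < γ) (hw₀ : ‖w₀‖ ≤ 1)
    (hsep : ∀ i, γ ≤ ⟪x i, w₀⟫) (hr : 0 ≤ r) :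
    ∃ u : E, ‖u‖ ≤ r / γ ∧ empiricalRisk ℓ x u ≤ ℓ r := by
  have hscale : 0 ≤ r / γ := by positivity
  refine ⟨(r / γ) • w₀, ?_, empiricalRisk_le_of_forall_le hℓ fun i => ?_⟩
  · rw [norm_smul, Real.norm_of_nonneg hscale]
    exact mul_le_of_le_one_right hscale hw₀
  · rw [real_inner_smul_right]
    calc r = r / γ * γ := (div_mul_cancel₀ r hγ.ne').symm
      _ ≤ r / γ * ⟪x i, w₀⟫ := by gcongr; exact hsep i

variable {η : ℝ} {w : ℕ → E} {n : ℕ}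

lemma empiricalRisk_gradientDescent_le (hℓ : IsConvexSmooth β ℓ ℓ') (hanti : Antitone ℓ)
    (hx : ∀ i, ‖x i‖ ≤ R) (hη : 0 < η) (hηβ : η * (β * R ^ 2) ≤ 1)
    (hγ : 0 < γ) (hw₀ : ‖w₀‖ ≤ 1) (hsep : ∀ i, γ ≤ ⟪x i, w₀⟫)
    (hw0 : w 0 = 0) (hw : ∀ t, w (t + 1) = w t - η • empiricalRiskGrad ℓ' x (w t))
    (hn : 0 < n) (hr : 0 ≤ r) :
    empiricalRisk ℓ x (w n) ≤ ℓ r + (r / γ) ^ 2 / (2 * η * n) := by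
  obtain ⟨u, hu, hrisk⟩ := exists_norm_le_div_empiricalRisk_le hanti hγ hw₀ hsep hr
  calc empiricalRisk ℓ x (w n) ≤ empiricalRisk ℓ x u + ‖w 0 - u‖ ^ 2 / (2 * η * n) :=
        sub_le_iff_le_add'.1
          ((isConvexSmooth_empiricalRisk hℓ hx).gradientDescent_sub_le_div hη hηβ hw hn u)
    _ ≤ ℓ r + (r / γ) ^ 2 / (2 * η * n) := by
        rw [hw0, zero_sub, norm_neg]
        gcongr

lemma norm_gradientDescent_le (hℓ : IsConvexSmooth β ℓ ℓ') (hanti : Antitone ℓ)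
    (hx : ∀ i, ‖x i‖ ≤ R) (hη : 0 ≤ η) (hηβ : η * (β * R ^ 2) ≤ 1)
    (hγ : 0 < γ) (hw₀ : ‖w₀‖ ≤ 1) (hsep : ∀ i, γ ≤ ⟪x i, w₀⟫)
    (hw0 : w 0 = 0) (hw : ∀ t, w (t + 1) = w t - η • empiricalRiskGrad ℓ' x (w t))
    (hr : 0 ≤ r) (hrisk : ℓ r ≤ empiricalRisk ℓ x (w n)) :
    ‖w n‖ ≤ 2 * (r / γ) := by
  obtain ⟨u, hu, hrisk_u⟩ := exists_norm_le_div_empiricalRisk_le hanti hγ hw₀ hsep hr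
  have hdist := (isConvexSmooth_empiricalRisk hℓ hx).norm_gradientDescent_sub_le hη hηβ hw
    (hrisk_u.trans hrisk)
  rw [hw0, zero_sub, norm_neg] at hdist
  linarith [norm_le_norm_sub_add (w n) u]

end EmpiricalRisk

section LogisticLoss

/-- The logistic loss of a margin. -/
noncomputable def logisticLoss (z : ℝ) : ℝ :=
  Real.log (1 + Real.exp (-z))

lemma hasDerivAt_logisticLoss (z : ℝ) : HasDerivAt logisticLoss (-Real.sigmoid (-z)) z := by
  refine (((hasDerivAt_neg z).exp.const_add 1).log (by positivity)).congr_deriv ?_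
  rw [← Real.sigmoid_mul_rexp_neg, Real.sigmoid_def]
  ring

lemma isConvexSmooth_logisticLoss :
    IsConvexSmooth (1 / 4) logisticLoss fun z => -Real.sigmoid (-z) := by
  refine .of_hasDerivAt hasDerivAt_logisticLoss
    (fun a b hab => neg_le_neg (Real.sigmoid_le (neg_le_neg hab))) ?_
  have hderiv (z : ℝ) : HasDerivAt (fun z => 1 / 4 * z - -Real.sigmoid (-z))
      ((Real.sigmoid z - 1 / 2) ^ 2) z := by
    simp only [Real.sigmoid_neg]
    exact (((hasDerivAt_id z).const_mul (1 / 4)).sub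
      ((Real.hasDerivAt_sigmoid z).const_sub 1).neg).congr_deriv (by ring)
  exact monotone_of_hasDerivAt_nonneg hderiv fun z => sq_nonneg _

lemma logisticLoss_pos (z : ℝ) : 0 < logisticLoss z :=
  Real.log_pos (lt_add_of_pos_right 1 (Real.exp_pos _))

lemma logisticLoss_zero : logisticLoss 0 = Real.log 2 := by
  norm_num [logisticLoss]

lemma logisticLoss_strictAnti : StrictAnti logisticLoss := fun a b hab =>
  Real.log_lt_log (by positivity) (by gcongr)

lemma logisticLoss_le_exp_neg (z : ℝ) : logisticLoss z ≤ Real.exp (-z) :=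
  (Real.log_le_sub_one_of_pos (by positivity)).trans_eq (add_sub_cancel_left _ _)

lemma logisticLoss_log {t : ℝ} (ht : 0 < t) :
    logisticLoss (Real.log t) = Real.log (1 + 1 / t) := by
  rw [logisticLoss, Real.exp_neg, Real.exp_log ht, one_div]

lemma exists_logisticLoss_eq {y : ℝ} (hy : 0 < y) : ∃ r, logisticLoss r = y := by
  refine ⟨-Real.log (Real.exp y - 1), ?_⟩
  rw [logisticLoss, neg_neg, Real.exp_log (sub_pos.2 (Real.one_lt_exp_iff.2 hy)), add_sub_cancel,
    Real.log_exp]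

lemma half_lt_log_one_add {y : ℝ} (hy : 0 < y) (hy2 : y < 2) : y / 2 < Real.log (1 + y) := by
  refine lt_of_lt_of_le ?_ (Real.le_log_one_add_of_nonneg hy.le)
  rw [div_lt_div_iff₀ two_pos (by positivity)]
  nlinarith

lemma mul_lt_of_logisticLoss_le {s r z : ℝ} (hs : 0 ≤ s) (hr : 0 ≤ r)
    (hz : logisticLoss z ≤ logisticLoss r ^ s / 2) : s * r < z := by
  have hloss_pos := logisticLoss_pos r
  have hloss_le_one : logisticLoss r ≤ 1 :=
    (logisticLoss_le_exp_neg r).trans (Real.exp_le_one_iff.2 (neg_nonpos.2 hr))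
  refine logisticLoss_strictAnti.lt_iff_gt.1 (hz.trans_lt ?_)
  calc logisticLoss r ^ s / 2 < Real.log (1 + logisticLoss r ^ s) :=
        half_lt_log_one_add (by positivity)
          ((Real.rpow_le_one hloss_pos.le hloss_le_one hs).trans_lt one_lt_two)
    _ ≤ Real.log (1 + Real.exp (-r) ^ s) := by
        gcongr
        exact logisticLoss_le_exp_neg r
    _ = logisticLoss (s * r) := by
        rw [logisticLoss, ← Real.exp_mul, neg_mul, mul_comm r]

variable {ι E : Type*} [Fintype ι] [NormedAddCommGroup E] [InnerProductSpace ℝ E] {x : ι → E}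

lemma one_sub_mul_card_le_card_margin_gt {v : E} {r ε γ α : ℝ} (hγ : 0 < γ)
    (hα : α ∈ Set.Icc (0 : ℝ) 1) (hr : 0 ≤ r)
    (hrisk : empiricalRisk logisticLoss x v = logisticLoss r)
    (hε : empiricalRisk logisticLoss x v ≤ ε) (hv : v ≠ 0) (hnorm : ‖v‖ ≤ 2 * (r / γ)) :
    (1 - 2 * ε ^ α) * Fintype.card ι ≤ #{i | (1 - α) * γ / 2 < ⟪x i, ‖v‖⁻¹ • v⟫} := by
  have hloss_pos := logisticLoss_pos r
  rw [hrisk] at hε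
  have hε_pos : 0 < ε := hloss_pos.trans_le hε
  have hα' : 0 ≤ 1 - α := sub_nonneg.2 hα.2
  refine (one_sub_mul_card_le_card_filter_le_expect_div
    (fun i => (logisticLoss_pos ⟪x i, v⟫).le) (by positivity : 0 < 2 * ε ^ α)).trans ?_
  gcongr with i
  intro hi
  have hthreshold : logisticLoss r / (2 * ε ^ α) ≤ logisticLoss r ^ (1 - α) / 2 := by
    rw [Real.rpow_sub hloss_pos, Real.rpow_one, div_div, mul_comm]
    have := hα.1
    gcongr
  have hmargin : (1 - α) * r < ⟪x i, v⟫ :=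
    mul_lt_of_logisticLoss_le hα' hr (hi.trans (hthreshold.trans' (by rw [← hrisk, empiricalRisk])))
  rw [real_inner_smul_right, inv_mul_eq_div, lt_div_iff₀ (norm_pos_iff.2 hv)]
  calc (1 - α) * γ / 2 * ‖v‖ ≤ (1 - α) * γ / 2 * (2 * (r / γ)) := by gcongr
    _ = (1 - α) * r := by field_simp
    _ < ⟪x i, v⟫ := hmargin

end LogisticLoss

section Rate

-- The quadratic term is needed to prove `mul_log_one_add_inv_le` down to `t = 5`: the bound
-- `t * log (1 + 1 / t) ≤ 1` would not suffice there.
lemma log_one_add_le_sub_sq_div_three {y : ℝ} (hy : 0 ≤ y) (hy2 : y ≤ 1 / 2) :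
    Real.log (1 + y) ≤ y - y ^ 2 / 3 := by
  rw [Real.log_le_iff_le_exp (by positivity)]
  refine le_trans ?_ (Real.quadratic_le_exp_of_nonneg (by nlinarith : 0 ≤ y - y ^ 2 / 3))
  have hfactor : 0 ≤ y ^ 2 * ((1 - y / 3) ^ 2 - 2 / 3) :=
    mul_nonneg (sq_nonneg y) (by nlinarith)
  linarith

lemma five_halves_le_log_sq {t : ℝ} (ht : 5 ≤ t) : 5 / 2 ≤ Real.log t ^ 2 := by
  have hexp : Real.exp 8 ≤ 5 ^ 5 := by
    calc Real.exp 8 = Real.exp 1 ^ 8 := by rw [← Real.exp_nat_mul]; norm_num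
      _ ≤ 2.7182818286 ^ 8 := by gcongr; exact Real.exp_one_lt_d9.le
      _ ≤ 5 ^ 5 := by norm_num
  have hlog5 : 8 ≤ 5 * Real.log 5 := by
    simpa using (Real.le_log_iff_exp_le (by norm_num)).2 hexp
  have hlog : Real.log 5 ≤ Real.log t := Real.log_le_log (by norm_num) ht
  nlinarith

lemma mul_log_one_add_inv_le {t : ℝ} (ht : 5 ≤ t) :
    t * Real.log (1 + 1 / t) ≤ 5 / 2 * ((t - 2) / (2 * (t - 1))) := by
  have hy : 1 / t ≤ 1 / 2 := one_div_le_one_div_of_le two_pos (by linarith)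
  calc t * Real.log (1 + 1 / t) ≤ t * (1 / t - (1 / t) ^ 2 / 3) := by
        gcongr
        exact log_one_add_le_sub_sq_div_three (by positivity) hy
    _ = (3 * t - 1) / (3 * t) := by field_simp
    _ ≤ 5 * (t - 2) / (2 * (2 * (t - 1))) := by
        rw [div_le_div_iff₀ (by linarith) (by linarith)]
        nlinarith
    _ = 5 / 2 * ((t - 2) / (2 * (t - 1))) := mul_div_mul_comm _ _ _ _

lemma log_one_add_inv_add_le {t γ : ℝ} (ht : 5 ≤ t) (hγ : 0 < γ) (hγ1 : γ ≤ 1) :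
    Real.log (1 + 1 / t) + (Real.log t / γ) ^ 2 / (2 * (t - 1)) ≤ Real.log t ^ 2 / (γ ^ 2 * t) := by
  have ht1 : 0 < t - 1 := by linarith
  have hgain : 0 ≤ (t - 2) / (2 * (t - 1)) := div_nonneg (by linarith) (by linarith)
  have hlog_nonneg : 0 ≤ Real.log (1 + 1 / t) := Real.log_nonneg (by simp; linarith)
  have hsmall : γ ^ 2 * (t * Real.log (1 + 1 / t))
      ≤ Real.log t ^ 2 * ((t - 2) / (2 * (t - 1))) :=
    calc γ ^ 2 * (t * Real.log (1 + 1 / t)) ≤ t * Real.log (1 + 1 / t) :=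
          mul_le_of_le_one_left (by positivity) (pow_le_one₀ hγ.le hγ1)
      _ ≤ 5 / 2 * ((t - 2) / (2 * (t - 1))) := mul_log_one_add_inv_le ht
      _ ≤ Real.log t ^ 2 * ((t - 2) / (2 * (t - 1))) := by
          gcongr
          exact five_halves_le_log_sq ht
  have hsplit : (Real.log t / γ) ^ 2 / (2 * (t - 1)) * (γ ^ 2 * t)
      = Real.log t ^ 2 - Real.log t ^ 2 * ((t - 2) / (2 * (t - 1))) := by
    field_simp
    ring
  rw [le_div_iff₀ (by positivity)]
  linarith

variable {ι E : Type*} [Fintype ι] [Nonempty ι] [NormedAddCommGroup E] [InnerProductSpace ℝ E]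

lemma empiricalRisk_logisticLoss_gradientDescent_le {x : ι → E} (hx : ∀ i, ‖x i‖ ≤ 1) {γ : ℝ}
    (hγ : 0 < γ) {w₀ : E} (hw₀ : ‖w₀‖ ≤ 1) (hsep : ∀ i, γ ≤ ⟪x i, w₀⟫) {w : ℕ → E} (hw0 : w 0 = 0)
    (hw : ∀ t, w (t + 1) = w t - (1 : ℝ) • empiricalRiskGrad (fun z => -Real.sigmoid (-z)) x (w t))
    {n : ℕ} (hn : 4 ≤ n) :
    empiricalRisk logisticLoss x (w n)
      ≤ Real.log (n + 1 : ℕ) ^ 2 / (γ ^ 2 * (n + 1 : ℕ)) := by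
  have hlarge : (5 : ℝ) ≤ (n + 1 : ℕ) := by exact_mod_cast Nat.succ_le_succ hn
  calc empiricalRisk logisticLoss x (w n)
      ≤ logisticLoss (Real.log (n + 1 : ℕ)) + (Real.log (n + 1 : ℕ) / γ) ^ 2 / (2 * 1 * n) :=
        empiricalRisk_gradientDescent_le isConvexSmooth_logisticLoss
          logisticLoss_strictAnti.antitone hx one_pos (by norm_num) hγ hw₀ hsep hw0 hw
          (by omega) (Real.log_natCast_nonneg _)
    _ = Real.log (1 + 1 / (n + 1 : ℕ))
          + (Real.log (n + 1 : ℕ) / γ) ^ 2 / (2 * ((n + 1 : ℕ) - 1)) := by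
        rw [logisticLoss_log (by positivity), mul_one, Nat.cast_succ, add_sub_cancel_right]
    _ ≤ Real.log (n + 1 : ℕ) ^ 2 / (γ ^ 2 * (n + 1 : ℕ)) :=
        log_one_add_inv_add_le hlarge hγ (le_one_of_forall_le_inner hx hw₀ hsep)

end Rate

theorem stmt_10_general {ι E : Type*} [Fintype ι] [Nonempty ι] [NormedAddCommGroup E]
    [InnerProductSpace ℝ E] [CompleteSpace E] (x : ι → E) (hx : ∀ i, ‖x i‖ ≤ 1)
    (γ : ℝ) (hγ : 0 < γ) (w₀ : E) (hw₀ : ‖w₀‖ ≤ 1) (hsep : ∀ i, γ ≤ ⟪x i, w₀⟫)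
    (w : ℕ → E) (hw1 : w 1 = 0)
    (hrec : ∀ t, 1 ≤ t → w (t + 1) = w t - gradient (empiricalRisk logisticLoss x) (w t))
    (T : ℕ) (hT : 4 < T) (hT' : Real.log T ^ 2 / (γ ^ 2 * T) < Real.log 2)
    (α : ℝ) (hα : α ∈ Set.Icc (0 : ℝ) 1) :
    (1 - 2 * (Real.log T ^ 2 / (γ ^ 2 * T)) ^ α) * Fintype.card ι
      ≤ #{i | (1 - α) * γ / 2 < ⟪x i, ‖w T‖⁻¹ • w T⟫} := by
  obtain ⟨n, rfl⟩ : ∃ n, T = n + 1 := ⟨T - 1, by omega⟩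
  have hw (t : ℕ) : w (t + 1 + 1)
      = w (t + 1) - (1 : ℝ) • empiricalRiskGrad (fun z => -Real.sigmoid (-z)) x (w (t + 1)) := by
    rw [hrec _ t.succ_pos, (hasGradientAt_empiricalRisk hasDerivAt_logisticLoss _).gradient,
      one_smul]
  have hrate := empiricalRisk_logisticLoss_gradientDescent_le (w := fun t => w (t + 1))
    hx hγ hw₀ hsep hw1 hw (Nat.le_of_lt_succ hT)
  have hlt : empiricalRisk logisticLoss x (w (n + 1)) < logisticLoss 0 :=
    (hrate.trans_lt hT').trans_eq logisticLoss_zero.symm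
  have hne : w (n + 1) ≠ 0 := fun h => hlt.ne (by rw [h, empiricalRisk_zero])
  obtain ⟨r, hr⟩ := exists_logisticLoss_eq (y := empiricalRisk logisticLoss x (w (n + 1)))
    (Finset.expect_pos (fun i _ => logisticLoss_pos _) Finset.univ_nonempty)
  have hr0 : 0 ≤ r := (logisticLoss_strictAnti.lt_iff_gt.1 (hr.trans_lt hlt)).le
  have hnorm : ‖w (n + 1)‖ ≤ 2 * (r / γ) :=
    norm_gradientDescent_le (w := fun t => w (t + 1)) isConvexSmooth_logisticLoss
      logisticLoss_strictAnti.antitone hx zero_le_one (by norm_num) hγ hw₀ hsep hw1 hw hr0 hr.le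
  exact one_sub_mul_card_le_card_margin_gt hγ hα hr0 hr.symm hrate hne hnorm

/-- Theorem 6 of the paper. For the logistic loss and
gradient descent with step size `1` on a dataset separable with margin `γ`:
for any `T > 4` with `log²(T)/(γ²T) < log 2` and any `α ∈ [0,1]`, at least
`(1 − 2(log²(T)/(γ²T))^α)·m` of the indices `i` satisfy
`xᵢᵀ(w_T/‖w_T‖) > (1−α)γ/2`. -/
theorem stmt_10 {d m : ℕ} (hm : 0 < m)
    (x : Fin m → EuclideanSpace ℝ (Fin d)) (hx : ∀ i, ‖x i‖ ≤ 1)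
    (γ : ℝ) (hγ : γ ∈ Set.Ioc (0 : ℝ) 1)
    (w₀ : EuclideanSpace ℝ (Fin d)) (hw₀ : ‖w₀‖ = 1)
    (hsep : ∀ i, γ ≤ ⟪x i, w₀⟫)
    (L : EuclideanSpace ℝ (Fin d) → ℝ)
    (hL : ∀ v, L v = (1 / m) * ∑ i, Real.log (1 + Real.exp (-⟪x i, v⟫)))
    (w : ℕ → EuclideanSpace ℝ (Fin d)) (hw1 : w 1 = 0)
    (hrec : ∀ t, 1 ≤ t → w (t + 1) = w t - gradient L (w t))
    (T : ℕ) (hT : 4 < T)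
    (hT' : (Real.log T) ^ 2 / (γ ^ 2 * T) < Real.log 2)
    (α : ℝ) (hα : α ∈ Set.Icc (0 : ℝ) 1) :
    ∃ S : Finset (Fin m),
      (1 - 2 * ((Real.log T) ^ 2 / (γ ^ 2 * T)) ^ α) * m ≤ S.card ∧
      ∀ i ∈ S, (1 - α) * γ / 2 < ⟪x i, ‖w T‖⁻¹ • w T⟫ := by
  have : NeZero m := ⟨hm.ne'⟩
  obtain rfl : L = empiricalRisk logisticLoss x := funext fun v => by
    rw [hL, one_div_mul_eq_div, empiricalRisk, Fintype.expect_eq_sum_div_card, Fintype.card_fin]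
    rfl
  exact ⟨({i | (1 - α) * γ / 2 < ⟪x i, ‖w T‖⁻¹ • w T⟫} : Finset (Fin m)),
    by simpa using stmt_10_general x hx γ hγ.1 w₀ hw₀.le hsep w hw1 hrec T hT hT' α hα, by simp⟩
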